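/- arXiv:2212.03786 — 2 statements merged into one kernel-verified Lean document; each statement's English description precedes it below -/
import Mathlib

section
/- Let Σ be a finite alphabet, let d ≥ 1, and let L₁ and L₂ be languages over Σ. Suppose there exists an n ≥ 0 such that the n-slices of L₁ and L₂ are different, and the symmetric difference (L₁ △ L₂) contains strictly fewer than 2^(d-1) words of length n. Then L₁ and L₂ are not d-similar; that is, there exist an m ≥ 0 and an assignment X of d×d real matrices to the letters of Σ such that the sum of the matrix products ∏X(w) over the words w of length m in L₁ differs from the corresponding sum over the words of length m in L₂. -/
/-!
Two finite sets of words are compared through their difference `f`, a noncommutative polynomial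
whose terms are the words of the symmetric difference. A nonzero `f` with fewer than `2 ^ d` terms
does not vanish identically on `d × d` matrices, by induction on `d` and on a word occurring in `f`.

* If `f` has a constant term, evaluate it at zero matrices.
* If terms of `f` start with two different letters, then for one of these letters `a` the quotient
  `a⁻¹ f` has fewer than `2 ^ (d - 1)` terms. A block triangular assignment whose corner
  recognises the leading letter `a` has the entries of `a⁻¹ f` in its top row.
* If all terms start with the same letter `a`, then `f = a · (a⁻¹ f)`, and a generic scalar shift of
  the matrices found for `a⁻¹ f` makes the factor `X a` regular without killing `a⁻¹ f`.
-/

open Finset Polynomial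

section WordPolynomials

variable {α R : Type*} [CommSemiring R]

/-- The value, at an assignment `X` of algebra elements to the letters, of a noncommutative
polynomial. Such a polynomial is encoded as a finitely supported function on words, giving the
coefficient of each word. -/
noncomputable def evalWords {A : Type*} [Semiring A] [Algebra R A] (X : α → A) :
    (List α →₀ R) →ₗ[R] A :=
  Finsupp.linearCombination R fun w => (w.map X).prod

/-- The left quotient `a⁻¹ f` of a noncommutative polynomial by a letter: the terms of `f` starting
with `a`, with this first letter removed. -/
noncomputable def leftQuotient (a : α) : (List α →₀ R) →ₗ[R] (List α →₀ R) :=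
  Finsupp.lcomapDomain (List.cons a) List.cons_injective

lemma leftQuotient_apply (a : α) (f : List α →₀ R) (w : List α) :
    leftQuotient a f w = f (a :: w) := rfl

lemma leftQuotient_single_nil (a : α) (r : R) :
    leftQuotient a (Finsupp.single [] r) = 0 := by
  ext w
  simp [leftQuotient_apply]

lemma leftQuotient_single_cons [DecidableEq α] (a b : α) (w : List α) (r : R) :
    leftQuotient a (Finsupp.single (b :: w) r) = if b = a then Finsupp.single w r else 0 := by
  ext v
  by_cases hba : b = a <;> simp [leftQuotient_apply, Finsupp.single_apply, hba]

lemma map_cons_support_leftQuotient_subset (a : α) (f : List α →₀ R) :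
    (leftQuotient a f).support.map ⟨List.cons a, List.cons_injective⟩ ⊆ f.support := by
  intro w hw
  obtain ⟨v, hv, rfl⟩ := mem_map.1 hw
  simpa [leftQuotient_apply] using hv

lemma card_support_leftQuotient_le (a : α) (f : List α →₀ R) :
    #(leftQuotient a f).support ≤ #f.support := by
  simpa only [card_map] using card_le_card (map_cons_support_leftQuotient_subset a f)

lemma card_support_leftQuotient_add_le {a b : α} (hab : a ≠ b) (f : List α →₀ R) :
    #(leftQuotient a f).support + #(leftQuotient b f).support ≤ #f.support := by
  classical
  have hdisj : Disjoint ((leftQuotient a f).support.map ⟨List.cons a, List.cons_injective⟩)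
      ((leftQuotient b f).support.map ⟨List.cons b, List.cons_injective⟩) := by
    simp [disjoint_left, hab.symm]
  simpa only [card_union_of_disjoint hdisj, card_map] using card_le_card
    (union_subset (map_cons_support_leftQuotient_subset a f)
      (map_cons_support_leftQuotient_subset b f))

lemma exists_two_mul_card_support_leftQuotient_le {a b : α} (hab : a ≠ b) {f : List α →₀ R}
    (ha : leftQuotient a f ≠ 0) (hb : leftQuotient b f ≠ 0) :
    ∃ c, leftQuotient c f ≠ 0 ∧ 2 * #(leftQuotient c f).support ≤ #f.support := by
  have hadd := card_support_leftQuotient_add_le hab f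
  rcases le_total #(leftQuotient a f).support #(leftQuotient b f).support with hle | hle
  · exact ⟨a, ha, by lia⟩
  · exact ⟨b, hb, by lia⟩

lemma support_subset_range_cons {a : α} {f : List α →₀ R} (hnil : f [] = 0)
    (honly : ∀ b ≠ a, leftQuotient b f = 0) :
    (f.support : Set (List α)) ⊆ Set.range (List.cons a) := by
  rintro (_ | ⟨b, w⟩) hw
  · exact absurd hnil (by simpa using hw)
  · obtain rfl : b = a := by
      by_contra hba
      exact Finsupp.mem_support_iff.1 hw (DFunLike.congr_fun (honly b hba) w)
    exact Set.mem_range_self w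

section Algebra

variable {A B : Type*} [Semiring A] [Algebra R A] [Semiring B] [Algebra R B]

lemma evalWords_single (X : α → A) (w : List α) (r : R) :
    evalWords X (Finsupp.single w r) = r • (w.map X).prod :=
  Finsupp.linearCombination_single R r w

lemma evalWords_zero (f : List α →₀ R) : evalWords (0 : α → A) f = algebraMap R A (f []) := by
  induction f using Finsupp.induction_linear with
  | zero => simp
  | add f g hf hg => simp [hf, hg]
  | single w r => cases w <;> simp [evalWords_single, Algebra.algebraMap_eq_smul_one]

lemma evalWords_zero_ne_zero [FaithfulSMul R A] {f : List α →₀ R} (hf : f [] ≠ 0) :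
    evalWords (0 : α → A) f ≠ 0 := by
  rwa [evalWords_zero, Ne, FaithfulSMul.algebraMap_eq_zero_iff]

lemma evalWords_algHom_comp (φ : A →ₐ[R] B) (X : α → A) (f : List α →₀ R) :
    evalWords (φ ∘ X) f = φ (evalWords X f) := by
  induction f using Finsupp.induction_linear with
  | zero => simp
  | add f g hf hg => simp [hf, hg]
  | single w r => simp [evalWords_single, map_list_prod]

lemma evalWords_eq_mul_leftQuotient (X : α → A) {a : α} {f : List α →₀ R}
    (hf : (f.support : Set (List α)) ⊆ Set.range (List.cons a)) :
    evalWords X f = X a * evalWords X (leftQuotient a f) := by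
  have hmap : (leftQuotient a f).mapDomain (List.cons a) = f :=
    Finsupp.mapDomain_comapDomain _ List.cons_injective f hf
  conv_lhs => rw [← hmap]
  induction leftQuotient a f using Finsupp.induction_linear with
  | zero => simp
  | add f g hf hg => simp [Finsupp.mapDomain_add, hf, hg, mul_add]
  | single w r => simp [Finsupp.mapDomain_single, evalWords_single]

end Algebra

section LetterDetector

variable [DecidableEq α] {d : ℕ}

/-- The block triangular matrix `[[0, eᵢ], [0, X b]]`, with the row `eᵢ` replaced by `0` when
`b ≠ a`. Along a nonempty word, the product of these matrices has a nonzero top row only if the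
word starts with `a`. -/
def letterDetector (X : α → Matrix (Fin d) (Fin d) R) (a : α) (i : Fin d) (b : α) :
    Matrix (Fin (d + 1)) (Fin (d + 1)) R :=
  Matrix.of (Fin.cons (Fin.cons 0 (if b = a then Pi.single i 1 else 0))
    fun k => Fin.cons 0 (X b k))

variable (X : α → Matrix (Fin d) (Fin d) R) (a : α) (i : Fin d)

lemma prod_letterDetector_succ_succ (w : List α) (k l : Fin d) :
    (w.map (letterDetector X a i)).prod k.succ l.succ = (w.map X).prod k l := by
  induction w generalizing k with
  | nil => simp [Matrix.one_apply]
  | cons b w ih => simp [Matrix.mul_apply, Fin.sum_univ_succ, letterDetector, ← ih]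

lemma prod_letterDetector_cons_zero_succ (b : α) (w : List α) (j : Fin d) :
    ((b :: w).map (letterDetector X a i)).prod 0 j.succ =
      if b = a then (w.map X).prod i j else 0 := by
  rw [List.map_cons, List.prod_cons, Matrix.mul_apply, Fin.sum_univ_succ]
  simp only [prod_letterDetector_succ_succ]
  by_cases hba : b = a <;> simp [letterDetector, hba, Pi.single_apply]

lemma evalWords_letterDetector_zero_succ (f : List α →₀ R) (j : Fin d) :
    evalWords (letterDetector X a i) f 0 j.succ = evalWords X (leftQuotient a f) i j := by
  induction f using Finsupp.induction_linear with
  | zero => simp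
  | add f g hf hg => simp [hf, hg]
  | single w r =>
    cases w with
    | nil => simp [evalWords_single, leftQuotient_single_nil, (Fin.succ_ne_zero j).symm]
    | cons b w =>
      rw [evalWords_single, Matrix.smul_apply, prod_letterDetector_cons_zero_succ,
        leftQuotient_single_cons]
      by_cases hba : b = a <;> simp [evalWords_single, hba]

end LetterDetector

lemma exists_evalWords_ne_zero_of_leftQuotient {d : ℕ} {X : α → Matrix (Fin d) (Fin d) R} {a : α}
    {f : List α →₀ R} (hX : evalWords X (leftQuotient a f) ≠ 0) :
    ∃ Y : α → Matrix (Fin (d + 1)) (Fin (d + 1)) R, evalWords Y f ≠ 0 := by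
  classical
  obtain ⟨i, j, hij⟩ : ∃ i j, evalWords X (leftQuotient a f) i j ≠ 0 := by
    simpa [← Matrix.ext_iff] using hX
  refine ⟨letterDetector X a i, fun hzero => hij ?_⟩
  rw [← evalWords_letterDetector_zero_succ, hzero, Matrix.zero_apply]

end WordPolynomials

section InfiniteDomain

variable {α R : Type*} [CommRing R] [IsDomain R] [Infinite R]

lemma exists_mapMatrix_aeval_ne_zero {m : Type*} [Fintype m] [DecidableEq m]
    {M : Matrix m m R[X]} (hM : M ≠ 0) : ∃ t : R, (aeval t).mapMatrix M ≠ 0 := by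
  contrapose! hM
  ext1 i j
  refine Polynomial.zero_of_eval_zero _ fun t => ?_
  simpa [coe_aeval_eq_eval] using congr_fun₂ (hM t) i j

lemma exists_mul_evalWords_ne_zero {m : Type*} [Fintype m] [DecidableEq m]
    {X : α → Matrix m m R} {f : List α →₀ R} (hX : evalWords X f ≠ 0) (a : α) :
    ∃ Y : α → Matrix m m R, Y a * evalWords Y f ≠ 0 := by
  -- The pencil `X b + T • 1` over `R[T]`: its determinant is monic, and `T = 0` gives back `X b`.
  let Z : α → Matrix m m R[X] := fun b => (-X b).charmatrix
  have hZ_zero : (aeval (0 : R)).mapMatrix ∘ Z = X := by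
    ext b i j
    by_cases hij : i = j <;> simp [Z, Matrix.charmatrix, hij]
  have hZ_reg : IsRegular (Z a) :=
    Matrix.isRegular_of_isLeftRegular_det (-X a).charpoly_monic.isRegular.left
  have hZ_eval : evalWords Z f ≠ 0 := by
    intro hzero
    rw [← hZ_zero, evalWords_algHom_comp, hzero, map_zero] at hX
    exact hX rfl
  obtain ⟨t, ht⟩ := exists_mapMatrix_aeval_ne_zero (mt hZ_reg.left.mul_left_eq_zero_iff.1 hZ_eval)
  refine ⟨(aeval t).mapMatrix ∘ Z, ?_⟩
  rwa [evalWords_algHom_comp, Function.comp_apply, ← map_mul]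

theorem exists_evalWords_ne_zero_of_card_support_lt {d : ℕ} {f : List α →₀ R} (hf : f ≠ 0)
    (hcard : #f.support < 2 ^ d) :
    ∃ X : α → Matrix (Fin d) (Fin d) R, evalWords X f ≠ 0 := by
  induction d generalizing f with
  | zero => exact absurd (by simpa using hcard) hf
  | succ d ih_dim =>
    obtain ⟨w, hw⟩ := Finsupp.ne_iff.1 hf
    induction w generalizing f with
    | nil => exact ⟨0, evalWords_zero_ne_zero hw⟩
    | cons a w ih_word =>
      have ha : leftQuotient a f ≠ 0 := Finsupp.ne_iff.2 ⟨w, hw⟩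
      by_cases hnil : f [] = 0
      · by_cases honly : ∀ b ≠ a, leftQuotient b f = 0
        · obtain ⟨X, hX⟩ := ih_word ha ((card_support_leftQuotient_le a f).trans_lt hcard) hw
          obtain ⟨Y, hY⟩ := exists_mul_evalWords_ne_zero hX a
          refine ⟨Y, ?_⟩
          rwa [evalWords_eq_mul_leftQuotient Y (support_subset_range_cons hnil honly)]
        · push Not at honly
          obtain ⟨b, hba, hb⟩ := honly
          obtain ⟨c, hc, hc_card⟩ := exists_two_mul_card_support_leftQuotient_le hba hb ha
          obtain ⟨X, hX⟩ := ih_dim hc (by lia)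
          exact exists_evalWords_ne_zero_of_leftQuotient hX
      · exact ⟨0, evalWords_zero_ne_zero hnil⟩

theorem exists_sum_prod_ne_of_card_symmDiff_lt [DecidableEq α] {d : ℕ}
    {S T : Finset (List α)} (hST : S ≠ T) (hcard : #(symmDiff S T) < 2 ^ d) :
    ∃ X : α → Matrix (Fin d) (Fin d) R,
      ∑ w ∈ S, (w.map X).prod ≠ ∑ w ∈ T, (w.map X).prod := by
  let f : List α →₀ R := ∑ w ∈ S, Finsupp.single w 1 - ∑ w ∈ T, Finsupp.single w 1
  have hf_apply (w : List α) : f w = (if w ∈ S then 1 else 0) - if w ∈ T then 1 else 0 := by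
    simp [f, Finsupp.single_apply]
  have hf_support : f.support = symmDiff S T := by
    ext w
    by_cases hS : w ∈ S <;> by_cases hT : w ∈ T <;> simp [hf_apply, mem_symmDiff, hS, hT]
  have hf : f ≠ 0 := by
    rwa [← Finsupp.support_nonempty_iff, hf_support, symmDiff_nonempty]
  obtain ⟨X, hX⟩ := exists_evalWords_ne_zero_of_card_support_lt hf (hf_support ▸ hcard)
  exact ⟨X, by simpa [f, evalWords_single, sub_ne_zero] using hX⟩

end InfiniteDomain

theorem not_d_similar_of_some_small_slice_diff_general
    {α R : Type*} [Finite α] [CommRing R] [IsDomain R] [Infinite R] (d n : ℕ)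
    (L₁ L₂ : Set (List α))
    (hne : {w ∈ L₁ | w.length = n} ≠ {w ∈ L₂ | w.length = n})
    (hcard : ({w ∈ symmDiff L₁ L₂ | w.length = n}).ncard < 2 ^ d) :
    ∃ X : α → Matrix (Fin d) (Fin d) R,
      (∑ᶠ w ∈ {w ∈ L₁ | w.length = n}, (w.map X).prod) ≠
      (∑ᶠ w ∈ {w ∈ L₂ | w.length = n}, (w.map X).prod) := by
  classical
  have hfin (L : Set (List α)) : {w ∈ L | w.length = n}.Finite :=
    (List.finite_length_eq α n).subset fun _ hw => hw.2
  have hsymmDiff : {w ∈ symmDiff L₁ L₂ | w.length = n} =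
      symmDiff {w ∈ L₁ | w.length = n} {w ∈ L₂ | w.length = n} :=
    Set.inter_symmDiff_distrib_right L₁ L₂ {w | w.length = n}
  rw [hsymmDiff, Set.ncard_eq_toFinset_card _ ((hfin L₁).symmDiff (hfin L₂)),
    Set.Finite.toFinset_symmDiff (hfin L₁) (hfin L₂)] at hcard
  obtain ⟨X, hX⟩ :=
    exists_sum_prod_ne_of_card_symmDiff_lt (R := R) (mt Set.Finite.toFinset_inj.1 hne) hcard
  refine ⟨X, ?_⟩
  rwa [finsum_mem_eq_finite_toFinset_sum _ (hfin L₁),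
    finsum_mem_eq_finite_toFinset_sum _ (hfin L₂)]

/-- **Theorem (stronger variant).** If for *some* `n` the `n`-slices of `L₁` and `L₂` differ,
but the symmetric difference `L₁ △ L₂` contains fewer than `2^(d-1)` words of length `n`,
then `L₁` and `L₂` are not `d`-similar: some assignment of `d×d` real matrices to the letters
distinguishes some slice. -/
theorem not_d_similar_of_some_small_slice_diff
    {α : Type*} [Fintype α] (d : ℕ) (hd : 1 ≤ d)
    (L₁ L₂ : Set (List α))
    (h : ∃ n : ℕ, {w ∈ L₁ | w.length = n} ≠ {w ∈ L₂ | w.length = n} ∧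
      ({w ∈ symmDiff L₁ L₂ | w.length = n}).ncard < 2 ^ (d - 1)) :
    ∃ (m : ℕ) (X : α → Matrix (Fin d) (Fin d) ℝ),
      (∑ᶠ w ∈ {w ∈ L₁ | w.length = m}, (w.map X).prod) ≠
      (∑ᶠ w ∈ {w ∈ L₂ | w.length = m}, (w.map X).prod) := by
  obtain ⟨n, hne, hcard⟩ := h
  exact ⟨n, not_d_similar_of_some_small_slice_diff_general d n L₁ L₂ hne
    (hcard.trans_le (Nat.pow_le_pow_right two_pos (Nat.sub_le d 1)))⟩
end

section
/- Let Σ be a finite alphabet with k = |Σ| ≥ 1 letters, let d ≥ 1, let p ≥ 1 be a real number, and let L₁ and L₂ be languages over Σ such that for every n ≥ 0 each of L₁ and L₂ contains at most p^(2n) words of length n. Suppose there exists ε > 0 such that for every assignment X of d×d real matrices to the letters of Σ satisfying Σ_{a ∈ Σ} ‖X(a)‖₁ < ε (where ‖·‖₁ denotes the sum of the absolute values of all entries), the families (∏X(w))_{w ∈ L₁} and (∏X(w))_{w ∈ L₂} are summable and Σ_{w ∈ L₁} ∏X(w) = Σ_{w ∈ L₂} ∏X(w). Then for every n ≥ 0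 and every assignment X of d×d real matrices to the letters of Σ (with no restriction on norms), the sum of ∏X(w) over the words w of length n in L₁ equals the sum of ∏X(w) over the words w of length n in L₂. -/
/-!
Along the ray `t ↦ t • X` the sum over a language becomes a power series in `t` whose `n`-th
coefficient is the sum over the `n`-slice at `X`. Two power series which converge to the same
function near the origin have the same coefficients: testing against continuous linear forms
reduces this to scalar power series. For `t` close to `0` the point `t • X` satisfies any smallness
condition, so no bound on `X` itself is left.
-/

open Filter Topology

section FiberwiseSums

variable {ι κ E : Type*} [AddCommMonoid E] [TopologicalSpace E]

theorem hasSum_finsum_mem_of_finite {s : Set ι} (hs : s.Finite) (f : ι → E) :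
    HasSum (fun i : s => f i) (∑ᶠ i ∈ s, f i) := by
  lift s to Finset ι using hs
  rw [finsum_mem_coe_finset]
  exact s.hasSum f

theorem hasSum_finsum_mem_fiber [ContinuousAdd E] [RegularSpace E] {s : Set ι} {f : ι → E} {a : E}
    (hf : HasSum (fun i : s => f i) a) (g : ι → κ) (hs : ∀ k, {i ∈ s | g i = k}.Finite) :
    HasSum (fun k => ∑ᶠ i ∈ {i ∈ s | g i = k}, f i) a := by
  have hind : HasSum (s.indicator f) a := hasSum_subtype_iff_indicator.mp hf
  refine ((Equiv.sigmaFiberEquiv g).hasSum_iff.mpr hind).sigma fun k => ?_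
  have hfiberSum := hasSum_subtype_iff_indicator.mp (hasSum_finsum_mem_of_finite (hs k) f)
  have hfiber : {i ∈ s | g i = k} = {i | g i = k} ∩ s := Set.inter_comm s {i | g i = k}
  rw [hfiber, ← Set.indicator_indicator] at hfiberSum
  rw [hfiber]
  exact hasSum_subtype_iff_indicator.mpr hfiberSum

end FiberwiseSums

section PowerSeries

variable {𝕜 : Type*} [NontriviallyNormedField 𝕜]

theorem hasFPowerSeriesAt_ofScalars_zero {a : ℕ → 𝕜} {f : 𝕜 → 𝕜}
    (h : ∀ᶠ t in 𝓝 0, HasSum (fun n => t ^ n * a n) (f t)) :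
    HasFPowerSeriesAt f (FormalMultilinearSeries.ofScalars 𝕜 a) 0 := by
  simpa only [hasFPowerSeriesAt_iff, FormalMultilinearSeries.coeff_ofScalars, smul_eq_mul,
    zero_add] using h

theorem eq_of_eventually_hasSum_pow_smul {E : Type*} [AddCommGroup E] [Module 𝕜 E]
    [TopologicalSpace E] [SeparatingDual 𝕜 E] {a b : ℕ → E} {f : 𝕜 → E}
    (ha : ∀ᶠ t in 𝓝 (0 : 𝕜), HasSum (fun n => t ^ n • a n) (f t))
    (hb : ∀ᶠ t in 𝓝 (0 : 𝕜), HasSum (fun n => t ^ n • b n) (f t)) :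
    a = b := by
  have hasFPowerSeriesAt_dual (φ : StrongDual 𝕜 E) {c : ℕ → E}
      (hc : ∀ᶠ t in 𝓝 (0 : 𝕜), HasSum (fun n => t ^ n • c n) (f t)) :
      HasFPowerSeriesAt (φ ∘ f) (FormalMultilinearSeries.ofScalars 𝕜 (φ ∘ c)) 0 :=
    hasFPowerSeriesAt_ofScalars_zero <| hc.mono fun t ht => by
      simpa only [map_smul, smul_eq_mul, Function.comp_apply] using φ.hasSum ht
  funext n
  refine (SeparatingDual.eq_iff_forall_dual_eq (R := 𝕜)).mpr fun φ => ?_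
  have hseries :=
    (hasFPowerSeriesAt_dual φ ha).eq_formalMultilinearSeries (hasFPowerSeriesAt_dual φ hb)
  simpa only [FormalMultilinearSeries.coeff_ofScalars, Function.comp_apply] using
    congrArg (fun P => FormalMultilinearSeries.coeff P n) hseries

end PowerSeries

section Slices

variable {α : Type*}

/-- The `n`-slice of a language `L`: the words of `L` of length `n`. -/
def wordSlice (L : Set (List α)) (n : ℕ) : Set (List α) := {w ∈ L | w.length = n}

theorem wordSlice_finite [Finite α] (L : Set (List α)) (n : ℕ) : (wordSlice L n).Finite :=
  (List.finite_length_eq α n).subset fun _ hw => hw.2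

/-- The sum of the products `∏X(w)` over the `n`-slice of `L`. It is a `finsum`, hence `0` by
convention if infinitely many of these products are nonzero; over a finite alphabet it is always a
genuine sum. -/
noncomputable def sliceSum {A : Type*} [Semiring A] (L : Set (List α)) (n : ℕ) (X : α → A) : A :=
  ∑ᶠ w ∈ wordSlice L n, (w.map X).prod

theorem prod_map_smul_eq_pow_length_smul {R A : Type*} [Monoid R] [Monoid A] [MulAction R A]
    [IsScalarTower R A A] [SMulCommClass R A A] (t : R) (X : α → A) (w : List α) :
    (w.map (t • X)).prod = t ^ w.length • (w.map X).prod := by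
  rw [← List.length_map X, List.smul_prod, List.map_map]
  rfl

theorem sliceSum_smul [Finite α] {R A : Type*} [CommSemiring R] [Semiring A] [Algebra R A]
    (L : Set (List α)) (n : ℕ) (t : R) (X : α → A) :
    sliceSum L n (t • X) = t ^ n • sliceSum L n X := by
  rw [sliceSum, sliceSum, smul_finsum_mem (wordSlice_finite L n)]
  refine finsum_mem_congr rfl fun w hw => ?_
  rw [prod_map_smul_eq_pow_length_smul, hw.2]

theorem hasSum_sliceSum [Finite α] {A : Type*} [Semiring A] [TopologicalSpace A] [ContinuousAdd A]
    [RegularSpace A] {L : Set (List α)} {X : α → A} {a : A}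
    (h : HasSum (fun w : L => ((w : List α).map X).prod) a) :
    HasSum (fun n => sliceSum L n X) a := by
  unfold sliceSum wordSlice
  exact hasSum_finsum_mem_fiber (f := fun w => (w.map X).prod) h List.length (wordSlice_finite L)

end Slices

section TopologicalAlgebra

variable {α 𝕜 A : Type*} [Finite α] [NontriviallyNormedField 𝕜] [Ring A] [Algebra 𝕜 A]
  [TopologicalSpace A] [IsTopologicalAddGroup A]

theorem hasSum_pow_smul_sliceSum {L : Set (List α)} {X : α → A} {t : 𝕜} {a : A}
    (h : HasSum (fun w : L => ((w : List α).map (t • X)).prod) a) :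
    HasSum (fun n => t ^ n • sliceSum L n X) a := by
  simpa only [sliceSum_smul] using hasSum_sliceSum h

theorem slice_sums_eq_of_sums_eq_near_origin_general [ContinuousSMul 𝕜 A] [SeparatingDual 𝕜 A]
    {L₁ L₂ : Set (List α)}
    (h : ∀ᶠ X : α → A in 𝓝 0,
      (Summable fun w : L₁ => ((w : List α).map X).prod) ∧
      (Summable fun w : L₂ => ((w : List α).map X).prod) ∧
      (∑' w : L₁, ((w : List α).map X).prod) = ∑' w : L₂, ((w : List α).map X).prod)
    (n : ℕ) (X : α → A) :
    sliceSum L₁ n X = sliceSum L₂ n X := by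
  have hray : Tendsto (fun t : 𝕜 => t • X) (𝓝 0) (𝓝 0) :=
    (continuous_id.smul continuous_const).tendsto' 0 0 (zero_smul 𝕜 X)
  suffices hcoeff : (fun n => sliceSum L₁ n X) = fun n => sliceSum L₂ n X from congrFun hcoeff n
  refine eq_of_eventually_hasSum_pow_smul
    (f := fun t : 𝕜 => ∑' w : L₁, ((w : List α).map (t • X)).prod) ?_ ?_
  all_goals filter_upwards [hray.eventually h] with t ⟨hsum₁, hsum₂, heq⟩
  · exact hasSum_pow_smul_sliceSum hsum₁.hasSum
  · exact hasSum_pow_smul_sliceSum (heq ▸ hsum₂.hasSum)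

end TopologicalAlgebra

section MatrixEntries

theorem separatingDual_matrix {m n R V : Type*} [Ring R] [TopologicalSpace R] [AddCommGroup V]
    [TopologicalSpace V] [Module R V] [SeparatingDual R V] : SeparatingDual R (Matrix m n V) where
  exists_ne_zero' M hM := by
    obtain ⟨i, j, hij⟩ : ∃ i j, M i j ≠ 0 := by
      by_contra! hzero
      exact hM (Matrix.ext hzero)
    obtain ⟨φ, hφ⟩ := SeparatingDual.exists_ne_zero (R := R) hij
    exact ⟨⟨φ.toLinearMap ∘ₗ Matrix.entryLinearMap R V i j,
      φ.continuous.comp (continuous_id.matrix_elem i j)⟩, hφ⟩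

theorem eventually_sum_abs_entries_lt {α m n : Type*} [Fintype α] [Fintype m] [Fintype n] {ε : ℝ}
    (hε : 0 < ε) :
    ∀ᶠ X : α → Matrix m n ℝ in 𝓝 0, (∑ a, ∑ i, ∑ j, |X a i j|) < ε := by
  have hcont : Continuous fun X : α → Matrix m n ℝ => ∑ a, ∑ i, ∑ j, |X a i j| := by
    fun_prop
  exact hcont.continuousAt.eventually_lt continuousAt_const (by simpa using hε)

end MatrixEntries

/-- **Theorem.** Let `L₁, L₂` be languages over a finite alphabet with `k ≥ 1` letters,
each having at most `p^(2n)` words of length `n` (`p ≥ 1`). If there is `ε > 0` such that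
for every assignment `X` of `d × d` real matrices to the letters with total entrywise
`ℓ¹` norm `Σ_a ‖X a‖₁ < ε`, the families `(∏X(w))_{w ∈ Lᵢ}` are summable with equal sums,
then for every `n` and *every* assignment `X` of `d × d` real matrices, the sum of
`∏X(w)` over the length-`n` words of `L₁` equals the corresponding sum for `L₂`. -/
theorem slice_sums_eq_of_sums_eq_near_origin
    {α : Type*} [Fintype α] (hk : 1 ≤ Fintype.card α) (d : ℕ) (hd : 1 ≤ d)
    (p : ℝ) (hp : 1 ≤ p) (L₁ L₂ : Set (List α))
    (h₁ : ∀ n : ℕ, (({w ∈ L₁ | w.length = n}).ncard : ℝ) ≤ p ^ (2 * n))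
    (h₂ : ∀ n : ℕ, (({w ∈ L₂ | w.length = n}).ncard : ℝ) ≤ p ^ (2 * n))
    (h : ∃ ε > (0 : ℝ), ∀ X : α → Matrix (Fin d) (Fin d) ℝ,
      (∑ a : α, ∑ i : Fin d, ∑ j : Fin d, |X a i j|) < ε →
      (Summable fun w : L₁ => ((w : List α).map X).prod) ∧
      (Summable fun w : L₂ => ((w : List α).map X).prod) ∧
      (∑' w : L₁, ((w : List α).map X).prod) = ∑' w : L₂, ((w : List α).map X).prod) :
    ∀ (n : ℕ) (X : α → Matrix (Fin d) (Fin d) ℝ),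
      (∑ᶠ w ∈ {w ∈ L₁ | w.length = n}, (w.map X).prod) =
      (∑ᶠ w ∈ {w ∈ L₂ | w.length = n}, (w.map X).prod) := by
  obtain ⟨ε, hε, h⟩ := h
  have : SeparatingDual ℝ (Matrix (Fin d) (Fin d) ℝ) := separatingDual_matrix
  exact slice_sums_eq_of_sums_eq_near_origin_general (𝕜 := ℝ)
    ((eventually_sum_abs_entries_lt hε).mono h)
end
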